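/- arXiv:1208.2478 — 2 statements merged into one kernel-verified Lean document; each statement's English description precedes it below -/
import Mathlib

section
/- Suppose a finite set S of AV pairs maximizes the coverage score c among all finite subsets of A × V, and supp(S) > 0. Then S is a θ-maximal itemset for the threshold θ = supp(S); in particular, a set of AV pairs with the highest coverage score is a maximal itemset for some positive threshold θ. -/
/-!
If some product matches `S'` and `S ⊂ S'`, then every pair of `S' \ S` has an attribute not
occurring in `S`: otherwise that product would take two values at one attribute. So `S'` covers
strictly more attributes, and since the importances are positive its second coverage factor is
strictly larger (`attrs_ssubset_of_ssubset`). If also `supp S' ≥ supp S > 0`, then `S'` has a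
strictly larger coverage score, contradicting the maximality of `S`.
-/

/-- The matching set `P(S)`: products in `P` matching every AV pair in `S`. -/
def matchSet {A V : Type*} [DecidableEq V]
    (P : Finset (A → V)) (S : Finset (A × V)) : Finset (A → V) :=
  P.filter (fun p => ∀ av ∈ S, p av.1 = av.2)

/-- The support of a set of AV pairs: total weight of the products matching it. -/
def supp {A V : Type*} [DecidableEq V]
    (P : Finset (A → V)) (w : (A → V) → ℝ) (S : Finset (A × V)) : ℝ :=
  ∑ p ∈ matchSet P S, w p

/-- The set of attributes occurring as first components of the AV pairs in `S`. -/
def attrs {A V : Type*} [DecidableEq A] (S : Finset (A × V)) : Finset A :=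
  S.image Prod.fst

/-- The coverage score `c(S) = (supp(S)/W) · ((∑_{a ∈ attrs S} z a)/Z)`. -/
noncomputable def coverage {A V : Type*} [Fintype A] [DecidableEq A] [DecidableEq V]
    (P : Finset (A → V)) (w : (A → V) → ℝ) (z : A → ℝ) (S : Finset (A × V)) : ℝ :=
  (supp P w S / ∑ p ∈ P, w p) * ((∑ a ∈ attrs S, z a) / ∑ a : A, z a)

/-- A set of AV pairs is `θ`-frequent if its support is at least `θ`. -/
def IsFrequent {A V : Type*} [DecidableEq V]
    (P : Finset (A → V)) (w : (A → V) → ℝ) (θ : ℝ) (S : Finset (A × V)) : Prop :=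
  θ ≤ supp P w S

/-- A set of AV pairs is a `θ`-maximal itemset if it is `θ`-frequent and no finite proper
superset of it is `θ`-frequent. -/
def IsMaximalItemset {A V : Type*} [DecidableEq V]
    (P : Finset (A → V)) (w : (A → V) → ℝ) (θ : ℝ) (S : Finset (A × V)) : Prop :=
  IsFrequent P w θ S ∧ ∀ S' : Finset (A × V), S ⊂ S' → ¬ IsFrequent P w θ S'

/-- Adding AV pairs to a set adds attributes, as long as the larger set is consistent, i.e.
some product matches it. -/
lemma attrs_ssubset_of_ssubset {A V : Type*} [DecidableEq A] [DecidableEq V]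
    {P : Finset (A → V)} {S S' : Finset (A × V)} (h : S ⊂ S')
    (hne : (matchSet P S').Nonempty) : attrs S ⊂ attrs S' := by
  obtain ⟨p, hp⟩ := hne
  have hp' : ∀ av ∈ S', p av.1 = av.2 := (Finset.mem_filter.mp hp).2
  have hsub := h.subset
  obtain ⟨⟨a, v⟩, hav', hav⟩ := Finset.exists_of_ssubset h
  refine Finset.ssubset_iff_subset_ne.mpr ⟨Finset.image_subset_image hsub, fun heq => hav ?_⟩
  have ha : a ∈ attrs S := heq ▸ Finset.mem_image_of_mem Prod.fst hav'
  obtain ⟨⟨b, u⟩, hbu, rfl⟩ := Finset.mem_image.mp ha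
  have huv : u = v := (hp' _ (hsub hbu)).symm.trans (hp' _ hav')
  exact huv ▸ hbu

/-- **Lemma 1 of the paper.** Suppose a finite set `S` of AV pairs maximizes the
coverage score `c` among all finite subsets of `A × V`, and `supp(S) > 0`.  Then `S` is a
`θ`-maximal itemset for the threshold `θ = supp(S)`; in particular, a set of AV pairs with the
highest coverage score is a maximal itemset for some positive threshold `θ`. -/
theorem maximalItemset_of_coverage_maximizer {A V : Type*} [Fintype A] [Nonempty A]
    [DecidableEq A] [DecidableEq V]
    (P : Finset (A → V)) (w : (A → V) → ℝ) (hw : ∀ p, 0 ≤ w p)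
    (hW : 0 < ∑ p ∈ P, w p)
    (z : A → ℝ) (hz : ∀ a, 0 < z a)
    (S : Finset (A × V))
    (hmax : ∀ S' : Finset (A × V), coverage P w z S' ≤ coverage P w z S)
    (hpos : 0 < supp P w S) :
    IsMaximalItemset P w (supp P w S) S ∧
      ∃ θ : ℝ, 0 < θ ∧ IsMaximalItemset P w θ S := by
  have key : IsMaximalItemset P w (supp P w S) S := by
    refine ⟨le_refl (supp P w S), fun S' hS' hfreq => ?_⟩
    have hle : supp P w S ≤ supp P w S' := hfreq
    have hne : (matchSet P S').Nonempty :=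
      Finset.nonempty_of_sum_ne_zero (hpos.trans_le hle).ne'
    have hattrs := attrs_ssubset_of_ssubset hS' hne
    obtain ⟨a, ha', ha⟩ := Finset.exists_of_ssubset hattrs
    have hsum : ∑ a ∈ attrs S, z a < ∑ a ∈ attrs S', z a :=
      Finset.sum_lt_sum_of_subset hattrs.subset ha' ha (hz a) fun b _ _ => (hz b).le
    have hZ : 0 < ∑ a : A, z a := Finset.sum_pos (fun a _ => hz a) Finset.univ_nonempty
    have hcov : coverage P w z S < coverage P w z S' :=
      mul_lt_mul' (div_le_div_of_nonneg_right hle hW.le) (div_lt_div_of_pos_right hsum hZ)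
        (div_nonneg (Finset.sum_nonneg fun b _ => (hz b).le) hZ.le)
        (div_pos (hpos.trans_le hle) hW)
    exact (hmax S').not_gt hcov
  exact ⟨key, supp P w S, hpos, key⟩
end

section
/- If S ⊊ S' are finite sets of AV pairs with supp(S') = supp(S) > 0, then the coverage scores satisfy c(S) < c(S'). -/
/-- A set of AV pairs matched by a single product `p` lies in the graph of `p`, so inside it no
new pair can reuse an old attribute. -/
theorem attrs_ssubset_of_matched {A V : Type*} [DecidableEq A]
    {S S' : Finset (A × V)} (hSS' : S ⊂ S') (p : A → V) (hp : ∀ av ∈ S', p av.1 = av.2) :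
    attrs S ⊂ attrs S' := by
  have hinj : Set.InjOn Prod.fst (S' : Set (A × V)) := by
    intro x hx y hy hxy
    exact Prod.ext hxy (by rw [← hp x hx, ← hp y hy, hxy])
  refine (Finset.ssubset_iff_of_subset (Finset.image_subset_image hSS'.subset)).2 ?_
  obtain ⟨x, hx, hxS⟩ := Finset.exists_of_ssubset hSS'
  refine ⟨x.1, Finset.mem_image_of_mem _ hx, fun h => hxS ?_⟩
  obtain ⟨y, hy, hyx⟩ := Finset.mem_image.1 h
  exact hinj (hSS'.subset hy) hx hyx ▸ hy

/-- If `S ⊊ S'` are finite sets of AV pairs with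
`supp(S') = supp(S) > 0`, then the coverage scores satisfy `c(S) < c(S')`. -/
theorem coverage_lt_of_supp_eq {A V : Type*} [Fintype A] [Nonempty A]
    [DecidableEq A] [DecidableEq V]
    (P : Finset (A → V)) (w : (A → V) → ℝ) (hw : ∀ p, 0 ≤ w p)
    (hW : 0 < ∑ p ∈ P, w p)
    (z : A → ℝ) (hz : ∀ a, 0 < z a)
    (S S' : Finset (A × V)) (hSS' : S ⊂ S')
    (hsupp : supp P w S' = supp P w S) (hpos : 0 < supp P w S) :
    coverage P w z S < coverage P w z S' := by
  obtain ⟨p, hp⟩ : (matchSet P S').Nonempty :=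
    Finset.nonempty_of_sum_ne_zero (f := w) (hsupp.trans_ne hpos.ne')
  have hattrs : attrs S ⊂ attrs S' :=
    attrs_ssubset_of_matched hSS' p (Finset.mem_filter.1 hp).2
  obtain ⟨a, ha, haS⟩ := Finset.exists_of_ssubset hattrs
  have hsum : ∑ a ∈ attrs S, z a < ∑ a ∈ attrs S', z a :=
    Finset.sum_lt_sum_of_subset hattrs.subset ha haS (hz a) fun b _ _ => (hz b).le
  have hZ : 0 < ∑ a : A, z a :=
    Finset.sum_pos (fun a _ => hz a) Finset.univ_nonempty
  unfold coverage
  rw [hsupp]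
  exact mul_lt_mul_of_pos_left (div_lt_div_of_pos_right hsum hZ) (div_pos hpos hW)
end
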